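/- For n ≥ 4, the central extension 1 → Z/2Z → S̃_n → S_n → 1 is non-trivial: there is no group homomorphism s : S_n → S̃_n with p ∘ s = id_{S_n}. -/

import Mathlib

open Equiv

/-- Generator `z` as an element of the free group. -/
def zF (n : ℕ) : FreeGroup (Fin (n-1) ⊕ Unit) := FreeGroup.of (Sum.inr ())

/-- Generator `τ̃ᵢ` as an element of the free group. -/
def tF (n : ℕ) (i : Fin (n-1)) : FreeGroup (Fin (n-1) ⊕ Unit) := FreeGroup.of (Sum.inl i)

/-- Relations of the spin extension of the symmetric group. -/
def spinRels (n : ℕ) : Set (FreeGroup (Fin (n-1) ⊕ Unit)) :=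
  {zF n * zF n} ∪
  {w | ∃ i : Fin (n-1), w = zF n * tF n i * (tF n i * zF n)⁻¹} ∪
  {w | ∃ i : Fin (n-1), w = tF n i * tF n i * (zF n)⁻¹} ∪
  {w | ∃ i j : Fin (n-1), 1 < |(i : ℤ) - (j : ℤ)| ∧ w = tF n i * tF n j * (zF n * tF n j * tF n i)⁻¹} ∪
  {w | ∃ i j : Fin (n-1), (j : ℕ) = (i : ℕ) + 1 ∧
        w = tF n i * tF n j * tF n i * (tF n j * tF n i * tF n j)⁻¹}

/-- The spin extension `S̃ₙ` of the symmetric group, as a presented group. -/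
abbrev SpinSym (n : ℕ) := PresentedGroup (spinRels n)

/-- The central element `z` of `S̃ₙ`. -/
def zt (n : ℕ) : SpinSym n := PresentedGroup.of (Sum.inr ())

/-- The generator `τ̃ᵢ` of `S̃ₙ`. -/
def tt (n : ℕ) (i : Fin (n-1)) : SpinSym n := PresentedGroup.of (Sum.inl i)

/-- `i` as an element of `Fin n`. -/
def finL (n : ℕ) (i : Fin (n-1)) : Fin n := ⟨i, by have := i.2; omega⟩

/-- `i+1` as an element of `Fin n`. -/
def finR (n : ℕ) (i : Fin (n-1)) : Fin n := ⟨(i : ℕ) + 1, by have := i.2; omega⟩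

/-- `τ̃ₖ` for a natural number index, `1` out of range. -/
def ttN (n : ℕ) (k : ℕ) : SpinSym n := if h : k < n - 1 then tt n ⟨k, h⟩ else 1

/-- For `i ≤ j`, the word `τ̃ᵢ·τ̃ᵢ₊₁⋯τ̃ⱼ₋₂·τ̃ⱼ₋₁·τ̃ⱼ₋₂⋯τ̃ᵢ₊₁·τ̃ᵢ` (equal to `1` when `i = j`). -/
def ttilCore (n i j : ℕ) : SpinSym n :=
  (((List.range' i (j - i)) ++ (List.range' i (j - 1 - i)).reverse).map (ttN n)).prod

/-- The lifted transpositions `τ̃_{i,j}`, with `τ̃_{j,i} = z·τ̃_{i,j}` for `i < j`,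
and `τ̃_{k,k} = 1`. -/
def ttil (n i j : ℕ) : SpinSym n := if j < i then zt n * ttilCore n j i else ttilCore n i j

section Coxeter

variable {G : Type*} [Group G]

/-- The ascending product `T j * T (j + 1) * ⋯ * T (j + m - 1)`. -/
def ascProd (T : ℕ → G) (j : ℕ) : ℕ → G
  | 0 => 1
  | m + 1 => T j * ascProd T (j + 1) m

theorem commute_ascProd {T : ℕ → G} (hcomm : ∀ i j, i + 1 < j → T i * T j = T j * T i)
    (i m : ℕ) : ∀ j, i + 1 < j → T i * ascProd T j m = ascProd T j m * T i := by
  induction m with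
  | zero => intro j _; simp [ascProd]
  | succ m ih =>
    intro j hj
    rw [ascProd, ← mul_assoc, hcomm i j hj, mul_assoc, ih (j + 1) (by omega), mul_assoc]

theorem succ_mul_ascProd {n : ℕ} {T : ℕ → G}
    (hcomm : ∀ i j, i + 1 < j → T i * T j = T j * T i)
    (hbraid : ∀ i, i + 2 < n → T i * T (i + 1) * T i = T (i + 1) * T i * T (i + 1))
    (i m : ℕ) : ∀ j, j ≤ i → i + 1 < j + m → j + m < n →
      T (i + 1) * ascProd T j m = ascProd T j m * T i := by
  induction m with
  | zero => intro j _ _; omega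
  | succ m ih =>
    intro j hj hi hn
    rcases hj.eq_or_lt with rfl | hlt
    · obtain ⟨m, rfl⟩ : ∃ l, m = l + 1 := ⟨m - 1, by omega⟩
      rw [ascProd, ascProd, mul_assoc, mul_assoc, ← commute_ascProd hcomm j m _ (by omega)]
      simp only [← mul_assoc]
      rw [hbraid j (by omega)]
    · rw [ascProd, ← mul_assoc, ← hcomm j (i + 1) (by omega), mul_assoc,
        ih (j + 1) (by omega) (by omega) (by omega), mul_assoc]

theorem exists_ascProd_mul {n : ℕ} {T : ℕ → G} (hsq : ∀ i, T i * T i = 1)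
    (hcomm : ∀ i j, i + 1 < j → T i * T j = T j * T i)
    (hbraid : ∀ i, i + 2 < n → T i * T (i + 1) * T i = T (i + 1) * T i * T (i + 1))
    {k : ℕ} (hk : k + 1 < n) {g : G} (hg : g ∈ Subgroup.closure (T '' Set.Iio (k + 1))) :
    ∃ j m, ∃ h ∈ Subgroup.closure (T '' Set.Iio k), j + m = k + 1 ∧ g = ascProd T j m * h := by
  have hgen : ∀ i < k, T i ∈ Subgroup.closure (T '' Set.Iio k) := fun i hi =>
    Subgroup.subset_closure ⟨i, hi, rfl⟩
  have step : ∀ i < k + 1, ∀ y : G,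
      (∃ j m, ∃ h ∈ Subgroup.closure (T '' Set.Iio k), j + m = k + 1 ∧ y = ascProd T j m * h) →
      ∃ j m, ∃ h ∈ Subgroup.closure (T '' Set.Iio k),
        j + m = k + 1 ∧ T i * y = ascProd T j m * h := by
    rintro i hi y ⟨j, m, h, hh, hjm, rfl⟩
    rcases lt_trichotomy (i + 1) j with hij | rfl | hij
    · refine ⟨j, m, T i * h, mul_mem (hgen i (by omega)) hh, hjm, ?_⟩
      rw [← mul_assoc, commute_ascProd hcomm i m j hij, mul_assoc]
    · exact ⟨i, m + 1, h, hh, by omega, by rw [ascProd, mul_assoc]⟩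
    · rcases (Nat.lt_succ_iff.mp hij).eq_or_lt with rfl | hlt
      · obtain ⟨m, rfl⟩ : ∃ l, m = l + 1 := ⟨m - 1, by omega⟩
        refine ⟨j + 1, m, h, hh, by omega, ?_⟩
        rw [ascProd, ← mul_assoc, ← mul_assoc, hsq, one_mul]
      · obtain ⟨i, rfl⟩ : ∃ l, i = l + 1 := ⟨i - 1, by omega⟩
        refine ⟨j, m, T i * h, mul_mem (hgen i (by omega)) hh, hjm, ?_⟩
        rw [← mul_assoc, succ_mul_ascProd hcomm hbraid i m j (by omega) (by omega) (by omega),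
          mul_assoc]
  induction hg using Subgroup.closure_induction_left with
  | one => exact ⟨k + 1, 0, 1, one_mem _, rfl, by simp [ascProd]⟩
  | mul_left x hx y _ ih =>
    obtain ⟨i, hi, rfl⟩ := hx
    exact step i hi y ih
  | inv_mul_cancel x hx y _ ih =>
    obtain ⟨i, hi, rfl⟩ := hx
    rw [inv_eq_of_mul_eq_one_left (hsq i)]
    exact step i hi y ih

theorem map_ascProd_apply {n : ℕ} {T : ℕ → G} (q : G →* Equiv.Perm (Fin n))
    (hq : ∀ i (hi : i + 1 < n), q (T i) = Equiv.swap ⟨i, by omega⟩ ⟨i + 1, hi⟩)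
    (m : ℕ) : ∀ j (hj : j + m < n),
      q (ascProd T j m) ⟨j + m, hj⟩ = ⟨j, by omega⟩ := by
  induction m with
  | zero => intro j hj; simp [ascProd]
  | succ m ih =>
    intro j hj
    have h := ih (j + 1) (by omega)
    simp only [show j + 1 + m = j + (m + 1) by omega] at h
    rw [ascProd, map_mul, Equiv.Perm.mul_apply, h, hq j (by omega), Equiv.swap_apply_right]

theorem map_apply_of_mem_closure {n : ℕ} {T : ℕ → G} (q : G →* Equiv.Perm (Fin n))
    (hq : ∀ i (hi : i + 1 < n), q (T i) = Equiv.swap ⟨i, by omega⟩ ⟨i + 1, hi⟩)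
    {k l : ℕ} (hkl : k < l) (hl : l < n) {g : G}
    (hg : g ∈ Subgroup.closure (T '' Set.Iio k)) : q g ⟨l, hl⟩ = ⟨l, hl⟩ := by
  suffices h : Subgroup.closure (T '' Set.Iio k) ≤
      (MulAction.stabilizer (Equiv.Perm (Fin n)) (⟨l, hl⟩ : Fin n)).comap q from h hg
  rw [Subgroup.closure_le]
  rintro _ ⟨i, hi, rfl⟩
  have hi : i < k := hi
  change q (T i) ⟨l, hl⟩ = ⟨l, hl⟩
  rw [hq i (by omega)]
  apply Equiv.swap_apply_of_ne_of_ne <;> simp only [ne_eq, Fin.mk.injEq] <;> omega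

/-- A group generated by elements satisfying the Coxeter relations of `Sₙ` maps injectively to
`Sₙ` as soon as its generators map to the adjacent transpositions. -/
theorem eq_one_of_map_eq_one {n : ℕ} {T : ℕ → G} (hsq : ∀ i, T i * T i = 1)
    (hcomm : ∀ i j, i + 1 < j → T i * T j = T j * T i)
    (hbraid : ∀ i, i + 2 < n → T i * T (i + 1) * T i = T (i + 1) * T i * T (i + 1))
    (q : G →* Equiv.Perm (Fin n))
    (hq : ∀ i (hi : i + 1 < n), q (T i) = Equiv.swap ⟨i, by omega⟩ ⟨i + 1, hi⟩)
    {k : ℕ} (hk : k < n) {g : G} (hg : g ∈ Subgroup.closure (T '' Set.Iio k))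
    (hg1 : q g = 1) : g = 1 := by
  induction k generalizing g with
  | zero => simpa using hg
  | succ k ih =>
    obtain ⟨j, m, h, hh, hjm, rfl⟩ := exists_ascProd_mul hsq hcomm hbraid hk hg
    have hfix := map_apply_of_mem_closure q hq (Nat.lt_succ_self k) hk hh
    have happ : q (ascProd T j m * h) ⟨k + 1, hk⟩ = ⟨j, by omega⟩ := by
      rw [map_mul, Equiv.Perm.mul_apply, hfix]
      simpa only [hjm] using map_ascProd_apply q hq m j (by omega)
    rw [hg1] at happ
    have hj : k + 1 = j := congrArg Fin.val happ
    obtain rfl : m = 0 := by omega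
    simp only [ascProd, one_mul] at hg1 ⊢
    exact ih (by omega) hh hg1

end Coxeter

section Relations

theorem zt_mul_zt (n : ℕ) : zt n * zt n = 1 :=
  PresentedGroup.one_of_mem (rels := spinRels n) (x := zF n * zF n) (by simp [spinRels])

theorem zt_mul_tt (n : ℕ) (i : Fin (n - 1)) : zt n * tt n i = tt n i * zt n :=
  PresentedGroup.mk_eq_mk_of_mul_inv_mem (rels := spinRels n)
    (x := zF n * tF n i) (y := tF n i * zF n)
    (Or.inl (Or.inl (Or.inl (Or.inr ⟨i, rfl⟩))))

theorem tt_mul_self (n : ℕ) (i : Fin (n - 1)) : tt n i * tt n i = zt n :=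
  PresentedGroup.mk_eq_mk_of_mul_inv_mem (rels := spinRels n)
    (x := tF n i * tF n i) (y := zF n) (Or.inl (Or.inl (Or.inr ⟨i, rfl⟩)))

theorem tt_mul_tt (n : ℕ) (i j : Fin (n - 1)) (hij : 1 < |(i : ℤ) - (j : ℤ)|) :
    tt n i * tt n j = zt n * tt n j * tt n i :=
  PresentedGroup.mk_eq_mk_of_mul_inv_mem (rels := spinRels n)
    (x := tF n i * tF n j) (y := zF n * tF n j * tF n i)
    (Or.inl (Or.inr ⟨i, j, hij, rfl⟩))

theorem tt_braid (n : ℕ) (i j : Fin (n - 1)) (hij : (j : ℕ) = (i : ℕ) + 1) :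
    tt n i * tt n j * tt n i = tt n j * tt n i * tt n j :=
  PresentedGroup.mk_eq_mk_of_mul_inv_mem (rels := spinRels n)
    (x := tF n i * tF n j * tF n i) (y := tF n j * tF n i * tF n j)
    (Or.inr ⟨i, j, hij, rfl⟩)

theorem zt_mem_center (n : ℕ) : zt n ∈ Subgroup.center (SpinSym n) := by
  have h : ∀ g : SpinSym n, g ∈ Subgroup.centralizer {zt n} :=
    PresentedGroup.generated_by _ _ fun x => by
      rw [Subgroup.mem_centralizer_singleton_iff]
      rcases x with i | _
      · exact (zt_mul_tt n i).symm
      · rfl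
  exact Subgroup.mem_center_iff.mpr fun g => Subgroup.mem_centralizer_singleton_iff.mp (h g)

end Relations

section Clifford

/-- The negative definite form on `ℝⁿ` for which the simple roots have value `-1`. -/
noncomputable def spinForm (n : ℕ) : QuadraticForm ℝ (Fin n → ℝ) :=
  QuadraticMap.weightedSumSquares ℝ fun _ => (-1 / 2 : ℝ)

/-- The simple root `eᵢ - eᵢ₊₁`. -/
noncomputable def simpleRoot (n : ℕ) (i : Fin (n - 1)) : Fin n → ℝ :=
  Pi.single (finL n i) 1 - Pi.single (finR n i) 1

theorem polar_spinForm (n : ℕ) (x y : Fin n → ℝ) :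
    QuadraticMap.polar (spinForm n) x y = -(x ⬝ᵥ y) := by
  simp only [QuadraticMap.polar, spinForm, QuadraticMap.weightedSumSquares_apply, dotProduct,
    ← Finset.sum_sub_distrib, ← Finset.sum_neg_distrib, Pi.add_apply, smul_eq_mul]
  exact Finset.sum_congr rfl fun _ _ => by ring

theorem simpleRoot_dotProduct (n : ℕ) (i j : Fin (n - 1)) :
    simpleRoot n i ⬝ᵥ simpleRoot n j =
      if i = j then 2 else if (j : ℕ) = i + 1 ∨ (i : ℕ) = j + 1 then -1 else 0 := by
  simp only [simpleRoot, sub_dotProduct, dotProduct_sub, single_dotProduct, Pi.single_apply, finL,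
    finR, Fin.ext_iff, one_mul]
  split_ifs <;> first | omega | norm_num

theorem spinForm_simpleRoot (n : ℕ) (i : Fin (n - 1)) : spinForm n (simpleRoot n i) = -1 := by
  have h := polar_spinForm n (simpleRoot n i) (simpleRoot n i)
  rw [QuadraticMap.polar_self, simpleRoot_dotProduct, if_pos rfl, two_nsmul] at h
  linarith

/-- The simple root `eᵢ - eᵢ₊₁` in the Clifford algebra. -/
noncomputable def cliffordRoot (n : ℕ) (i : Fin (n - 1)) : CliffordAlgebra (spinForm n) :=
  CliffordAlgebra.ι (spinForm n) (simpleRoot n i)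

theorem cliffordRoot_mul_self (n : ℕ) (i : Fin (n - 1)) :
    cliffordRoot n i * cliffordRoot n i = -1 := by
  rw [cliffordRoot, CliffordAlgebra.ι_sq_scalar, spinForm_simpleRoot, map_neg, map_one]

theorem cliffordRoot_mul_cliffordRoot (n : ℕ) (i j : Fin (n - 1))
    (hij : 1 < |(i : ℤ) - (j : ℤ)|) :
    cliffordRoot n i * cliffordRoot n j = -1 * cliffordRoot n j * cliffordRoot n i := by
  have h := CliffordAlgebra.ι_mul_ι_add_swap (Q := spinForm n) (simpleRoot n i) (simpleRoot n j)
  rw [lt_abs] at hij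
  rw [polar_spinForm, simpleRoot_dotProduct, if_neg (by rintro rfl; omega), if_neg (by omega),
    neg_zero, map_zero] at h
  rw [neg_one_mul, neg_mul]
  exact eq_neg_of_add_eq_zero_left h

theorem cliffordRoot_braid (n : ℕ) (i j : Fin (n - 1)) (hij : (j : ℕ) = (i : ℕ) + 1) :
    cliffordRoot n i * cliffordRoot n j * cliffordRoot n i =
      cliffordRoot n j * cliffordRoot n i * cliffordRoot n j := by
  have h := CliffordAlgebra.ι_mul_ι_add_swap (Q := spinForm n) (simpleRoot n i) (simpleRoot n j)
  rw [polar_spinForm, simpleRoot_dotProduct, if_neg (by rintro rfl; omega), if_pos (Or.inl hij),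
    neg_neg, map_one] at h
  change cliffordRoot n i * cliffordRoot n j + cliffordRoot n j * cliffordRoot n i = 1 at h
  have hi := cliffordRoot_mul_self n i
  have hj := cliffordRoot_mul_self n j
  generalize cliffordRoot n i = a at *
  generalize cliffordRoot n j = b at *
  rw [eq_sub_of_add_eq h, sub_mul, mul_assoc b a a, hi, eq_sub_of_add_eq' h, sub_mul,
    mul_assoc a b b, hj]
  noncomm_ring

/-- The unit of the Clifford algebra given by a simple root. -/
noncomputable def cliffordUnit (n : ℕ) (i : Fin (n - 1)) : (CliffordAlgebra (spinForm n))ˣ where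
  val := cliffordRoot n i
  inv := -cliffordRoot n i
  val_inv := by rw [mul_neg, cliffordRoot_mul_self, neg_neg]
  inv_val := by rw [neg_mul, cliffordRoot_mul_self, neg_neg]

theorem zt_ne_one (n : ℕ) : zt n ≠ 1 := by
  let f : Fin (n - 1) ⊕ Unit → (CliffordAlgebra (spinForm n))ˣ :=
    Sum.elim (cliffordUnit n) fun _ => -1
  have hz : FreeGroup.lift f (zF n) = -1 := FreeGroup.lift_apply_of
  have ht : ∀ i, FreeGroup.lift f (tF n i) = cliffordUnit n i := fun i => FreeGroup.lift_apply_of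
  have hrel : ∀ r ∈ spinRels n, FreeGroup.lift f r = 1 := by
    rintro r ((((hr | ⟨i, rfl⟩) | ⟨i, rfl⟩) | ⟨i, j, hij, rfl⟩) | ⟨i, j, hij, rfl⟩)
    · rw [Set.mem_singleton_iff.mp hr, map_mul, hz, neg_mul_neg, one_mul]
    all_goals
      rw [map_mul, map_inv, mul_inv_eq_one]
      simp only [map_mul, hz, ht]
    · rw [neg_one_mul, mul_neg_one]
    · exact Units.ext (cliffordRoot_mul_self n i)
    · exact Units.ext (cliffordRoot_mul_cliffordRoot n i j hij)
    · exact Units.ext (cliffordRoot_braid n i j hij)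
  intro h
  have h1 : PresentedGroup.toGroup hrel (zt n) = -1 := PresentedGroup.toGroup.of hrel
  rw [h, map_one] at h1
  have h2 : (1 : CliffordAlgebra (spinForm n)) = -1 := congrArg Units.val h1
  have h3 : algebraMap ℝ (CliffordAlgebra (spinForm n)) 1 = algebraMap ℝ _ (-1) := by
    rw [map_neg, map_one]
    exact h2
  have h4 := (algebraMap ℝ (CliffordAlgebra (spinForm n))).injective h3
  norm_num at h4

end Clifford

theorem mem_zpowers_zt_of_map_eq_one (n : ℕ) (p : SpinSym n →* Equiv.Perm (Fin n))
    (hpt : ∀ i : Fin (n-1), p (tt n i) = Equiv.swap (finL n i) (finR n i))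
    (hpz : p (zt n) = 1) {g : SpinSym n} (hg : p g = 1) : g ∈ Subgroup.zpowers (zt n) := by
  rcases Nat.eq_zero_or_pos n with rfl | hn
  · have h : ∀ x : SpinSym 0, x ∈ Subgroup.zpowers (zt 0) :=
      PresentedGroup.generated_by _ _ fun x => by
        rcases x with i | _
        · exact i.elim0
        · exact Subgroup.mem_zpowers _
    exact h g
  let Z := Subgroup.zpowers (zt n)
  have hZ : Z ≤ Subgroup.center (SpinSym n) := by
    rw [Subgroup.zpowers_le]
    exact zt_mem_center n
  have : Z.Normal := ⟨fun x hx y => by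
    rw [Subgroup.mem_center_iff.mp (hZ hx) y, mul_inv_cancel_right]; exact hx⟩
  let π := QuotientGroup.mk' Z
  have hπz : π (zt n) = 1 := (QuotientGroup.eq_one_iff _).mpr (Subgroup.mem_zpowers _)
  let q : SpinSym n ⧸ Z →* Equiv.Perm (Fin n) := QuotientGroup.lift Z p <| by
    rw [Subgroup.zpowers_le]
    exact hpz
  have hT : ∀ i (hi : i < n - 1), ttN n i = tt n ⟨i, hi⟩ := fun i hi => dif_pos hi
  have hT' : ∀ i, ¬ i < n - 1 → ttN n i = 1 := fun i hi => dif_neg hi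
  have key : π g = 1 := by
    refine eq_one_of_map_eq_one (n := n) (T := fun i => π (ttN n i)) ?_ ?_ ?_ q ?_
      (k := n - 1) (by omega) ?_ hg
    · intro i
      by_cases hi : i < n - 1
      · rw [hT i hi, ← map_mul, tt_mul_self, hπz]
      · rw [hT' i hi, map_one, one_mul]
    · intro i j hij
      by_cases hj : j < n - 1
      · rw [hT j hj, hT i (by omega), ← map_mul, tt_mul_tt, map_mul, map_mul, hπz, one_mul]
        rw [lt_abs]
        simp only
        omega
      · rw [hT' j hj, map_one, one_mul, mul_one]
    · intro i hi
      simp only [hT i (by omega), hT (i + 1) (by omega), ← map_mul]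
      rw [tt_braid n _ _ rfl]
    · intro i hi
      change p (ttN n i) = _
      rw [hT i (by omega), hpt]
      rfl
    · have h : ∀ x : SpinSym n,
          x ∈ (Subgroup.closure ((fun i => π (ttN n i)) '' Set.Iio (n - 1))).comap π :=
        PresentedGroup.generated_by _ _ fun x => by
          rw [Subgroup.mem_comap]
          rcases x with i | _
          · exact Subgroup.subset_closure ⟨i, i.2, congrArg π (hT i i.2)⟩
          · change π (zt n) ∈ _
            rw [hπz]
            exact one_mem _
      exact h g
  exact (QuotientGroup.eq_one_iff _).mp key

theorem no_section (n : ℕ) (hn : 4 ≤ n)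
    (p : SpinSym n →* Equiv.Perm (Fin n))
    (hpt : ∀ i : Fin (n-1), p (tt n i) = Equiv.swap (finL n i) (finR n i))
    (hpz : p (zt n) = 1) :
    ¬ ∃ s : Equiv.Perm (Fin n) →* SpinSym n, p.comp s = MonoidHom.id (Equiv.Perm (Fin n)) := by
  rintro ⟨s, hs⟩
  let i : Fin (n - 1) := ⟨0, by omega⟩
  let τ : Equiv.Perm (Fin n) := Equiv.swap (finL n i) (finR n i)
  have hps : p (s τ) = τ := DFunLike.congr_fun hs τ
  have hss : s τ * s τ = 1 := by rw [← map_mul, Equiv.swap_mul_self, map_one]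
  obtain ⟨c, hc⟩ : (tt n i)⁻¹ * s τ ∈ Subgroup.zpowers (zt n) := by
    apply mem_zpowers_zt_of_map_eq_one n p hpt hpz
    rw [map_mul, map_inv, hps, hpt, inv_mul_cancel]
  have hcomm : Commute (zt n ^ c) (tt n i) := Commute.zpow_left (zt_mul_tt n i) c
  have hsq : zt n ^ c * zt n ^ c = 1 := by
    rw [← (Commute.refl (zt n)).mul_zpow, zt_mul_zt, one_zpow]
  apply zt_ne_one n
  rw [← hss, eq_mul_of_inv_mul_eq hc.symm, mul_assoc, ← mul_assoc (zt n ^ c), hcomm.eq, mul_assoc,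
    hsq, mul_one, tt_mul_self]
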